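/- For all disjoint coalitions C, D ⊆ AG and all formulas φ, ψ ∈ Φ, the formula (⟨C⟩φ ∧ ⟨D⟩ψ) → ⟨C∪D⟩(φ∧ψ) holds at every state of every independent general concurrent game model. -/

import Mathlib

/-! If `σC` witnesses `⟨C⟩φ` and `σD` witnesses `⟨D⟩ψ`, their merge `jaUnion σC σD` witnesses
`⟨C ∪ D⟩(φ ∧ ψ)`: independence makes it available, and every action profile extending the merge
extends both `σC` and (as `C` and `D` are disjoint) `σD`, so each of its outcomes satisfies both
`φ` and `ψ`. -/

namespace CL

/-- The language Φ of coalition logic over a set of agents, with atomic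
propositions drawn from ℕ (a countable set). -/
inductive Formula (Agent : Type) : Type
  | top : Formula Agent
  | atom : ℕ → Formula Agent
  | neg : Formula Agent → Formula Agent
  | and : Formula Agent → Formula Agent → Formula Agent
  | coal : Set Agent → Formula Agent → Formula Agent

namespace Formula

variable {Agent : Type}

def bot : Formula Agent := neg top

def or (φ ψ : Formula Agent) : Formula Agent := neg (and (neg φ) (neg ψ))

def imp (φ ψ : Formula Agent) : Formula Agent := or (neg φ) ψ

def iff (φ ψ : Formula Agent) : Formula Agent := and (imp φ ψ) (imp ψ φ)

end Formula

/-- The three frame properties: seriality, independence of agents, determinism.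
`ES` is represented by `Set P3`, the eight subsets of {S, I, D}. -/
inductive P3 : Type
  | S | I | D
deriving DecidableEq
section
open Classical

/-- Merge of two joint actions of disjoint coalitions. -/
noncomputable def jaUnion {Agent Act : Type} {C D : Set Agent}
    (σC : C → Act) (σD : D → Act) : ↥(C ∪ D) → Act :=
  fun a =>
    if h : a.1 ∈ C then σC ⟨a.1, h⟩
    else σD ⟨a.1, ((Set.mem_union _ _ _).mp a.2).resolve_left h⟩

end

/-- A general concurrent game frame: a nonempty set of states, a nonempty set
of actions, and an outcome function for the grand coalition.  Joint actions of
a coalition C are functions C → Act; action profiles are functions Agent → Act. -/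
structure Frame (Agent : Type) where
  State : Type
  state_nonempty : Nonempty State
  Act : Type
  act_nonempty : Nonempty Act
  out : State → (Agent → Act) → Set State

namespace Frame

variable {Agent : Type} (F : Frame Agent)

/-- Outcome function for a coalition C. -/
def outC (C : Set Agent) (s : F.State) (σ : C → F.Act) : Set F.State :=
  ⋃ (τ : Agent → F.Act) (_ : ∀ a : C, τ a.1 = σ a), F.out s τ

/-- Availability function: the available joint actions of C at s. -/
def aja (C : Set Agent) (s : F.State) : Set (C → F.Act) :=
  {σ | (F.outC C s σ).Nonempty}

def Serial : Prop := ∀ (s : F.State) (C : Set Agent), (F.aja C s).Nonempty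

def Independent : Prop :=
  ∀ (s : F.State) (C D : Set Agent), C ∩ D = ∅ →
    ∀ σC ∈ F.aja C s, ∀ σD ∈ F.aja D s, jaUnion σC σD ∈ F.aja (C ∪ D) s

def Deterministic : Prop :=
  ∀ s : F.State, ∀ σ ∈ F.aja Set.univ s, ∃ t : F.State, F.outC Set.univ s σ = {t}

end Frame

/-- A general concurrent game model: a frame together with a labeling function
(atomic propositions are drawn from the countable set ℕ). -/
structure Model (Agent : Type) extends Frame Agent where
  lab : State → Set ℕ

namespace Model

variable {Agent : Type} (M : Model Agent)

/-- Satisfaction: M, s ⊨ φ. -/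
def sat : Formula Agent → M.State → Prop
  | .top, _ => True
  | .atom n, s => n ∈ M.lab s
  | .neg φ, s => ¬ sat φ s
  | .and φ ψ, s => sat φ s ∧ sat ψ s
  | .coal C φ, s => ∃ σ ∈ M.toFrame.aja C s, ∀ t ∈ M.toFrame.outC C s σ, sat φ t

/-- M is an X-model (for X ∈ ES). -/
def IsX (X : Set P3) : Prop :=
  (P3.S ∈ X → M.toFrame.Serial) ∧ (P3.I ∈ X → M.toFrame.Independent) ∧
    (P3.D ∈ X → M.toFrame.Deterministic)

end Model

/-- φ is X-valid: φ holds at every pointed X-model. -/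
def XValid {Agent : Type} (X : Set P3) (φ : Formula Agent) : Prop :=
  ∀ M : Model Agent, M.IsX X → ∀ s : M.State, M.sat φ s

/-- φ is X-satisfiable: φ holds at some pointed X-model. -/
def XSat {Agent : Type} (X : Set P3) (φ : Formula Agent) : Prop :=
  ∃ M : Model Agent, M.IsX X ∧ ∃ s : M.State, M.sat φ s

/-- φ ⊨_XL ψ : ψ holds at every pointed X-model at which φ holds. -/
def XConseq {Agent : Type} (X : Set P3) (φ ψ : Formula Agent) : Prop :=
  ∀ M : Model Agent, M.IsX X → ∀ s : M.State, M.sat φ s → M.sat ψ s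

/-- A-IA is valid on independent models: for disjoint coalitions C, D, the
formula (⟨C⟩φ ∧ ⟨D⟩ψ) → ⟨C∪D⟩(φ∧ψ) holds at every state of every independent
general concurrent game model. -/
theorem ia_valid_on_independent {Agent : Type} [Fintype Agent] (M : Model Agent)
    (hM : M.toFrame.Independent) (C D : Set Agent) (hCD : C ∩ D = ∅)
    (φ ψ : Formula Agent) (s : M.State) :
    M.sat (((Formula.coal C φ).and (Formula.coal D ψ)).imp
      (Formula.coal (C ∪ D) (φ.and ψ))) s := by
  -- `imp φ ψ` unfolds to `¬(¬¬φ ∧ ¬ψ)`.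
  rintro ⟨h, hn⟩
  refine h fun ⟨⟨σC, hσC, hφ⟩, ⟨σD, hσD, hψ⟩⟩ => hn ?_
  refine ⟨jaUnion σC σD, hM s C D hCD σC hσC σD hσD, fun t ht => ?_⟩
  simp only [Frame.outC, Set.mem_iUnion] at ht hφ hψ
  obtain ⟨τ, hτ, ht⟩ := ht
  refine ⟨hφ t ⟨τ, fun a => ?_, ht⟩, hψ t ⟨τ, fun a => ?_, ht⟩⟩
  · simpa [jaUnion] using hτ ⟨a.1, Or.inl a.2⟩
  -- Disjointness makes the merged action follow `σD` on `D`.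
  · have ha : a.1 ∉ C := fun h => (Set.ext_iff.mp hCD a.1).mp ⟨h, a.2⟩
    simpa [jaUnion, ha] using hτ ⟨a.1, Or.inr a.2⟩

end CL
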